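/- Descartes' rule of signs: Let P = ∑_{i=0}^{n} a_i x^i be a nonzero real polynomial, let V(P) be the number of sign variations in the coefficient sequence (a_0, a_1, ..., a_n) after deleting zero entries, and let m be the number of positive real roots of P counted with multiplicity. Then m ≤ V(P) and V(P) − m is even. -/

import Mathlib

/-- Number of sign variations of a list of reals whose zero entries have already been removed. -/
noncomputable def signVarAux : List ℝ → ℕ
  | x :: y :: t => (if x * y < 0 then 1 else 0) + signVarAux (y :: t)
  | _ => 0

/-- Number of sign variations of a list of reals (zero entries are deleted first). -/
noncomputable def signVar (l : List ℝ) : ℕ := signVarAux (l.filter (fun x => x ≠ 0))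

/-- Sign variation count of the coefficient sequence `(a₀, a₁, …, a_n)` of a polynomial. -/
noncomputable def polySignVar (P : Polynomial ℝ) : ℕ :=
  signVar ((List.range (P.natDegree + 1)).map fun i => P.coeff i)

/-!
The sign of the trailing coefficient of `P` differs from the sign of the leading coefficient by
`(-1) ^ V(P)`, since every sign variation flips the sign once. It also differs by `(-1) ^ m`: a
factor `X - η` with `0 < η` has leading coefficient `1` and trailing coefficient `-η`, and a
polynomial without positive roots has the sign of its leading coefficient near `+∞` and that of its
trailing coefficient near `0`. Hence `V(P)` and `m` have the same parity. The bound `m ≤ V(P)` is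
`Polynomial.roots_countP_pos_le_signVariations`.
-/

open Polynomial
open SignType (sign)

theorem mul_neg_iff_sign_ne_sign {R : Type*} [Ring R] [LinearOrder R] [IsStrictOrderedRing R]
    {a b : R} (ha : a ≠ 0) (hb : b ≠ 0) : a * b < 0 ↔ sign a ≠ sign b := by
  rw [← sign_eq_neg_one_iff, sign_mul]
  rw [← sign_ne_zero] at ha hb
  generalize sign a = s at *
  generalize sign b = t at *
  decide +revert

theorem signVarAux_append_pair (l : List ℝ) (a b : ℝ) :
    signVarAux (l ++ [a, b]) = signVarAux (l ++ [a]) + if a * b < 0 then 1 else 0 := by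
  induction l with
  | nil => simp [signVarAux]
  | cons x l ih =>
    cases l with
    | nil => simp [signVarAux]
    | cons y l =>
      simp only [List.cons_append, signVarAux] at ih ⊢
      rw [ih, add_assoc]

theorem signVarAux_reverse (l : List ℝ) : signVarAux l.reverse = signVarAux l := by
  induction l with
  | nil => rfl
  | cons x l ih =>
    cases l with
    | nil => rfl
    | cons y l =>
      simp only [List.reverse_cons, List.append_assoc, List.cons_append, List.nil_append] at ih ⊢
      rw [signVarAux_append_pair, ih, signVarAux, mul_comm y x, add_comm]

theorem signVarAux_cons_add_one_eq_length_destutter' (a : ℝ) (l : List ℝ)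
    (h : ∀ x ∈ a :: l, x ≠ 0) :
    signVarAux (a :: l) + 1 = ((l.map sign).destutter' (· ≠ ·) (sign a)).length := by
  induction l generalizing a with
  | nil => rfl
  | cons b l ih =>
    obtain ⟨ha, hl⟩ := List.forall_mem_cons.1 h
    have hab := mul_neg_iff_sign_ne_sign ha (List.forall_mem_cons.1 hl).1
    rw [signVarAux, add_assoc, ih b hl, List.map_cons, List.destutter'_cons]
    by_cases hs : sign a = sign b
    · simp [hab, hs]
    · simp [hab, hs, add_comm]

theorem signVarAux_eq_length_destutter_sub_one (l : List ℝ) (h : ∀ x ∈ l, x ≠ 0) :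
    signVarAux l = ((l.map sign).destutter (· ≠ ·)).length - 1 := by
  cases l with
  | nil => rfl
  | cons a l =>
    rw [List.map_cons, List.destutter_cons',
      ← signVarAux_cons_add_one_eq_length_destutter' a l h, Nat.add_sub_cancel]

theorem polySignVar_eq_signVariations (P : ℝ[X]) : polySignVar P = P.signVariations := by
  obtain rfl | hP := eq_or_ne P 0
  · simp [polySignVar, signVar, signVarAux]
  have hcoeffs : P.coeffList = ((List.range (P.natDegree + 1)).map P.coeff).reverse := by
    rw [coeffList, withBotSucc_degree_eq_natDegree_add_one hP, List.map_reverse]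
  have hfilter (l : List ℝ) :
      (l.map sign).filter (· ≠ 0) = (l.filter (fun x => x ≠ 0)).map sign := by
    simp [List.filter_map, Function.comp_def]
  rw [polySignVar, signVar, ← signVarAux_reverse, ← List.filter_reverse, ← hcoeffs,
    signVarAux_eq_length_destutter_sub_one _ (by simp), ← hfilter, signVariations]

section Semiring

variable {R : Type*} [Semiring R]

theorem natTrailingDegree_eraseLead {P : R[X]} (h : P.eraseLead ≠ 0) :
    P.eraseLead.natTrailingDegree = P.natTrailingDegree := by
  have hmem : P.eraseLead.natTrailingDegree ∈ P.eraseLead.support :=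
    natTrailingDegree_mem_support_of_nonzero h
  have hle : P.natTrailingDegree ≤ P.eraseLead.natTrailingDegree :=
    natTrailingDegree_le_of_mem_supp _ <| Finset.mem_of_mem_erase (P.eraseLead_support ▸ hmem)
  have hlt : P.natTrailingDegree < P.natDegree :=
    hle.trans_lt (lt_natDegree_of_mem_eraseLead_support hmem)
  refine le_antisymm (natTrailingDegree_le_of_ne_zero ?_) hle
  rw [eraseLead_coeff_of_ne _ hlt.ne, coeff_natTrailingDegree_ne_zero]
  rintro rfl
  exact h eraseLead_zero

theorem trailingCoeff_eraseLead {P : R[X]} (h : P.eraseLead ≠ 0) :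
    P.eraseLead.trailingCoeff = P.trailingCoeff := by
  have hne : P.eraseLead.natTrailingDegree ≠ P.natDegree :=
    ne_natDegree_of_mem_eraseLead_support (natTrailingDegree_mem_support_of_nonzero h)
  rw [trailingCoeff, eraseLead_coeff_of_ne _ hne, natTrailingDegree_eraseLead h, trailingCoeff]

theorem sign_trailingCoeff_eq_neg_one_pow_signVariations [LinearOrder R] (P : R[X]) :
    sign P.trailingCoeff = (-1) ^ P.signVariations * sign P.leadingCoeff := by
  induction hn : P.support.card using Nat.strong_induction_on generalizing P with
  | _ n ih =>
  obtain rfl | hP := eq_or_ne P 0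
  · simp
  obtain hQ | hQ := eq_or_ne P.eraseLead 0
  · obtain ⟨d, c, rfl⟩ : ∃ d c, P = monomial d c :=
      ⟨_, _, by simpa [hQ] using P.eraseLead_add_monomial_natDegree_leadingCoeff.symm⟩
    have hc : c ≠ 0 := by simpa using hP
    simp [trailingCoeff, natTrailingDegree_monomial hc]
  have hsign := ih _ (hn ▸ eraseLead_support_card_lt hP) P.eraseLead rfl
  rw [trailingCoeff_eraseLead hQ] at hsign
  rw [hsign, signVariations_eq_eraseLead_add_ite hP, pow_add, mul_assoc]
  congr 1
  obtain hst | hst :=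
    sign_eq_sign_or_eq_neg (leadingCoeff_ne_zero.2 hP) (leadingCoeff_ne_zero.2 hQ)
  · simp [hst, hQ, SignType.self_eq_neg_iff]
  · simp [hst]

end Semiring

theorem sign_eval_eq_sign_leadingCoeff_of_roots_lt {P : ℝ[X]} {x : ℝ}
    (h : ∀ y, P.IsRoot y → y < x) : sign (P.eval x) = sign P.leadingCoeff := by
  obtain hlc | hlc | hlc := lt_trichotomy P.leadingCoeff 0
  · rw [sign_neg hlc, sign_neg (eval_lt_zero_of_roots_lt_of_leadingCoeff_nonpos h hlc.le)]
  · rw [leadingCoeff_eq_zero.1 hlc, eval_zero, leadingCoeff_zero]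
  · rw [sign_pos hlc, sign_pos (zero_lt_eval_of_roots_lt_of_leadingCoeff_nonneg h hlc.le)]

theorem sign_trailingCoeff_eq_sign_leadingCoeff_of_forall_pos {P : ℝ[X]}
    (h : ∀ x, 0 < x → ¬ P.IsRoot x) : sign P.trailingCoeff = sign P.leadingCoeff := by
  -- `P.reverse` has the value of `P` at `1`, its positive roots are the inverses of those of `P`,
  -- and its leading coefficient is the trailing coefficient of `P`.
  have hreverse : ∀ x, 0 < x → ¬ P.reverse.IsRoot x := by
    intro x hx hroot
    let := invertibleOfNonzero (inv_ne_zero hx.ne')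
    refine h x⁻¹ (inv_pos.2 hx) ((eval₂_reverse_eq_zero_iff (RingHom.id ℝ) x⁻¹ P).1 ?_)
    simpa using hroot
  have heval : P.reverse.eval 1 = P.eval 1 := by
    let := invertibleOne (α := ℝ)
    simpa using eval₂_reverse_mul_pow (RingHom.id ℝ) 1 P
  have lt_one {Q : ℝ[X]} (hQ : ∀ x, 0 < x → ¬ Q.IsRoot x) (y : ℝ) (hy : Q.IsRoot y) : y < 1 :=
    lt_of_not_ge fun h1 => hQ y (one_pos.trans_le h1) hy
  rw [← reverse_leadingCoeff, ← sign_eval_eq_sign_leadingCoeff_of_roots_lt (lt_one hreverse),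
    heval, sign_eval_eq_sign_leadingCoeff_of_roots_lt (lt_one h)]

theorem trailingCoeff_X_sub_C {R : Type*} [Ring R] {a : R} (ha : a ≠ 0) :
    (X - C a).trailingCoeff = -a := by
  have h0 : (X - C a).coeff 0 = -a := by simp
  rw [trailingCoeff, natTrailingDegree_eq_zero.2 (.inr (h0 ▸ neg_ne_zero.2 ha)), h0]

theorem sign_trailingCoeff_eq_neg_one_pow_countP_roots (P : ℝ[X]) :
    sign P.trailingCoeff = (-1) ^ P.roots.countP (0 < ·) * sign P.leadingCoeff := by
  induction hm : P.roots.countP (0 < ·) generalizing P with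
  | zero =>
    obtain rfl | hP := eq_or_ne P 0
    · simp
    rw [pow_zero, one_mul]
    exact sign_trailingCoeff_eq_sign_leadingCoeff_of_forall_pos fun x hx hroot =>
      Multiset.countP_eq_zero.1 hm x ((mem_roots hP).2 hroot) hx
  | succ m ih =>
    obtain ⟨η, hmem, hη⟩ : ∃ η ∈ P.roots, 0 < η :=
      Multiset.countP_pos.1 (m.succ_pos.trans_eq hm.symm)
    obtain ⟨Q, rfl⟩ := dvd_iff_isRoot.2 (isRoot_of_mem_roots hmem)
    have hQ : Q.roots.countP (0 < ·) = m := by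
      rw [roots_mul (ne_zero_of_mem_roots hmem), roots_X_sub_C, Multiset.singleton_add,
        Multiset.countP_cons_of_pos _ hη] at hm
      exact Nat.succ_injective hm
    rw [trailingCoeff_mul, trailingCoeff_X_sub_C hη.ne', leadingCoeff_mul, leadingCoeff_X_sub_C,
      one_mul, sign_mul, ih Q hQ, sign_neg (neg_neg_of_pos hη), pow_succ', mul_assoc]

/-- Descartes' rule of signs: the number `m` of positive real roots of a nonzero real
polynomial, counted with multiplicity, satisfies `m ≤ V(P)` and `V(P) − m` is even. -/
theorem descartes_rule_of_signs (P : Polynomial ℝ) (hP : P ≠ 0) :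
    (P.roots.filter (fun x => 0 < x)).card ≤ polySignVar P ∧
    Even (polySignVar P - (P.roots.filter (fun x => 0 < x)).card) := by
  have hle : P.roots.countP (0 < ·) ≤ P.signVariations := roots_countP_pos_le_signVariations P
  have hsign : sign P.leadingCoeff ≠ 0 := sign_ne_zero.2 (leadingCoeff_ne_zero.2 hP)
  have hpow : (-1 : SignType) ^ P.signVariations = (-1) ^ P.roots.countP (0 < ·) :=
    mul_right_cancel₀ hsign <| (sign_trailingCoeff_eq_neg_one_pow_signVariations P).symm.trans
      (sign_trailingCoeff_eq_neg_one_pow_countP_roots P)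
  have hne : (-1 : SignType) ≠ 1 := by decide
  rw [polySignVar_eq_signVariations, ← Multiset.countP_eq_card_filter, Nat.even_sub hle,
    ← neg_one_pow_eq_one_iff_even hne, hpow, neg_one_pow_eq_one_iff_even hne]
  exact ⟨hle, Iff.rfl⟩
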